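/- Let G ∈ C¹(𝕋ⁿ × ℝⁿ) satisfy (A1), (A2) and let f ∈ C²(𝕋ⁿ × ℝ) satisfy (A3). Assume moreover that the ergodic equation f(x,0) + G(x,Du(x)) = 0 on 𝕋ⁿ admits a continuous viscosity solution (normalization of the ergodic constant to 0). For each ε > 0 let v^ε be a continuous viscosity solution of f(x, ε v^ε(x)) + G(x, Dv^ε(x)) = 0 on 𝕋ⁿ. Then there exists a continuous function v⁰ on 𝕋ⁿ such that v^ε converges uniformly on 𝕋ⁿ to v⁰ as ε → 0⁺, and v⁰ is a viscosity solution of f(x,0) + G(x,Dv⁰(x)) = 0 on 𝕋ⁿ. -/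

import Mathlib

open Filter Set
open scoped Topology

noncomputable section

/-- Functions on the torus `𝕋ⁿ` are identified with `ℤⁿ`-periodic functions on `ℝⁿ`. -/
def ZnPeriodic {n : ℕ} (u : EuclideanSpace ℝ (Fin n) → ℝ) : Prop :=
  ∀ (x : EuclideanSpace ℝ (Fin n)) (k : Fin n → ℤ),
    u (x + (EuclideanSpace.equiv (Fin n) ℝ).symm (fun i => (k i : ℝ))) = u x

/-- Viscosity subsolution of `E(x, u(x), Du(x)) = 0` on `ℝⁿ`. -/
def ViscSub {n : ℕ} (E : EuclideanSpace ℝ (Fin n) → ℝ → EuclideanSpace ℝ (Fin n) → ℝ)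
    (u : EuclideanSpace ℝ (Fin n) → ℝ) : Prop :=
  ∀ φ : EuclideanSpace ℝ (Fin n) → ℝ, ContDiff ℝ 1 φ →
    ∀ x₀ : EuclideanSpace ℝ (Fin n), IsLocalMax (u - φ) x₀ →
      E x₀ (u x₀) (gradient φ x₀) ≤ 0

/-- Viscosity supersolution of `E(x, u(x), Du(x)) = 0` on `ℝⁿ`. -/
def ViscSuper {n : ℕ} (E : EuclideanSpace ℝ (Fin n) → ℝ → EuclideanSpace ℝ (Fin n) → ℝ)
    (u : EuclideanSpace ℝ (Fin n) → ℝ) : Prop :=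
  ∀ φ : EuclideanSpace ℝ (Fin n) → ℝ, ContDiff ℝ 1 φ →
    ∀ x₀ : EuclideanSpace ℝ (Fin n), IsLocalMin (u - φ) x₀ →
      0 ≤ E x₀ (u x₀) (gradient φ x₀)

/-- Viscosity solution. -/
def ViscSol {n : ℕ} (E : EuclideanSpace ℝ (Fin n) → ℝ → EuclideanSpace ℝ (Fin n) → ℝ)
    (u : EuclideanSpace ℝ (Fin n) → ℝ) : Prop :=
  ViscSub E u ∧ ViscSuper E u

/-
The `v ε` are bounded by comparison with the ergodic solution, and coercivity together with
convexity of `G` makes them equi-Lipschitz, so it suffices to order any two uniform limits `h`, `h'`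
of the family. For `δ < ε` the function `(1 - δ/ε) h + (δ/ε) v ε` is, by convexity, a subsolution of
an equation that can be compared with the one solved by `v δ`. At a maximum point `z` of the
difference this gives `(f z (ε * v ε z) - f z 0) / ε ≤ (f z (δ * v δ z) - f z 0) / δ`. Both
quotients are close to `f_r(z, 0) * v ε z` and `f_r(z, 0) * v δ z` with `f_r > 0`, so
`v ε z ≤ v δ z` up to a small error. Choosing `ε` with `v ε` close to `h`, this yields `h ≤ v δ` up
to a small error for every small `δ`, hence `h ≤ h'`.
-/

section Gradient

variable {E : Type*} [NormedAddCommGroup E] [InnerProductSpace ℝ E] [CompleteSpace E]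
  {φ ψ : E → ℝ} {p q x : E}

lemma hasGradientAt_add (hφ : HasGradientAt φ p x) (hψ : HasGradientAt ψ q x) :
    HasGradientAt (φ + ψ) (p + q) x := by
  rw [hasGradientAt_iff_hasFDerivAt, map_add]
  exact hφ.hasFDerivAt.add hψ.hasFDerivAt

lemma hasGradientAt_const_smul (c : ℝ) (hφ : HasGradientAt φ p x) :
    HasGradientAt (c • φ) (c • p) x := by
  rw [hasGradientAt_iff_hasFDerivAt, map_smul]
  exact hφ.hasFDerivAt.const_smul c

lemma hasGradientAt_neg (hφ : HasGradientAt φ p x) : HasGradientAt (-φ) (-p) x := by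
  simpa using hasGradientAt_const_smul (-1) hφ

lemma hasGradientAt_norm_sub_sq (a x : E) :
    HasGradientAt (fun y => ‖y - a‖ ^ 2) ((2 : ℝ) • (x - a)) x := by
  rw [hasGradientAt_iff_hasFDerivAt]
  refine ((hasFDerivAt_id x).sub_const a).norm_sq.congr_fderiv ?_
  ext y
  simp

omit [CompleteSpace E] in
lemma contDiff_norm_sub_sq {m : WithTop ℕ∞} (a : E) : ContDiff ℝ m (fun y : E => ‖y - a‖ ^ 2) :=
  (contDiff_id.sub contDiff_const).norm_sq ℝ

lemma continuous_gradient (hφ : ContDiff ℝ 1 φ) : Continuous (gradient φ) :=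
  (InnerProductSpace.toDual ℝ E).symm.continuous.comp (hφ.continuous_fderiv one_ne_zero)

lemma hasGradientAt_of_contDiff (hφ : ContDiff ℝ 1 φ) (x : E) :
    HasGradientAt φ (gradient φ x) x :=
  (hφ.differentiable one_ne_zero x).hasGradientAt

lemma hasGradientAt_sqrt_norm_sub_sq_add (a : E) {η : ℝ} (hη : 0 < η) (x : E) :
    HasGradientAt (fun y => √(‖y - a‖ ^ 2 + η ^ 2)) ((√(‖x - a‖ ^ 2 + η ^ 2))⁻¹ • (x - a)) x := by
  have hpos : 0 < ‖x - a‖ ^ 2 + η ^ 2 := by positivity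
  have h := ((hasGradientAt_norm_sub_sq a x).hasFDerivAt.add_const (η ^ 2)).sqrt hpos.ne'
  rw [hasGradientAt_iff_hasFDerivAt]
  refine h.congr_fderiv ?_
  rw [← map_smul, smul_smul]
  congr 2
  field_simp

omit [CompleteSpace E] in
lemma contDiff_sqrt_norm_sub_sq_add {m : WithTop ℕ∞} (a : E) {η : ℝ} (hη : 0 < η) :
    ContDiff ℝ m (fun y : E => √(‖y - a‖ ^ 2 + η ^ 2)) :=
  ((contDiff_norm_sub_sq a).add contDiff_const).sqrt fun _ => by positivity

end Gradient

section Doubling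

variable {E : Type*} [NormedAddCommGroup E] [ProperSpace E] {u : E → ℝ} {x : E}

/-- Doubling of variables: comparing the maximum of the penalised function with its values at
`(b, b)` and at `(x, x)` gives the two estimates. -/
lemma exists_isMaxOn_doubling {K : NNReal} (hu : LipschitzWith K u) {ψ : E → ℝ}
    (hψ : Continuous ψ) {r : ℝ} (hr : 0 ≤ r)
    (hstrict : ∀ y ∈ Metric.closedBall x r, u y + ψ y + ‖y - x‖ ^ 2 ≤ u x + ψ x) {N : ℝ}
    (hN : 0 < N) :
    ∃ a b : E, N * ‖a - b‖ ≤ 2 * K ∧ ‖b - x‖ ^ 2 ≤ K * ‖a - b‖ ∧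
      IsMaxOn (fun q : E × E => u q.1 + ψ q.2 - N / 2 * ‖q.1 - q.2‖ ^ 2)
        (Metric.closedBall x r ×ˢ Metric.closedBall x r) (a, b) := by
  have hcont : Continuous (fun q : E × E => u q.1 + ψ q.2 - N / 2 * ‖q.1 - q.2‖ ^ 2) := by
    have := hu.continuous
    fun_prop
  have hx : x ∈ Metric.closedBall x r := Metric.mem_closedBall_self hr
  obtain ⟨⟨a, b⟩, ⟨-, hb⟩, hmax⟩ :=
    ((isCompact_closedBall x r).prod (isCompact_closedBall x r)).exists_isMaxOn
      ⟨(x, x), mk_mem_prod hx hx⟩ hcont.continuousOn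
  have hbb : u b + ψ b ≤ u a + ψ b - N / 2 * ‖a - b‖ ^ 2 := by simpa using hmax (mk_mem_prod hb hb)
  have hxx : u x + ψ x ≤ u a + ψ b - N / 2 * ‖a - b‖ ^ 2 := by simpa using hmax (mk_mem_prod hx hx)
  have hlip : u a - u b ≤ K * ‖a - b‖ :=
    (le_abs_self _).trans (by simpa [Real.dist_eq, dist_eq_norm] using hu.dist_le_mul a b)
  have hpen : 0 ≤ N / 2 * ‖a - b‖ ^ 2 := by positivity
  refine ⟨a, b, ?_, by linarith [hstrict b hb], hmax⟩
  rcases (norm_nonneg (a - b)).eq_or_lt with h0 | h0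
  · rw [← h0, mul_zero]
    positivity
  · exact le_of_mul_le_mul_right (by nlinarith) h0

end Doubling

section Superdifferential

variable {E : Type*} [NormedAddCommGroup E] [InnerProductSpace ℝ E]

/-- The (viscosity) superdifferential of `u` at `x`: the gradients at `x` of the `C¹` functions
touching `u` from above at `x`, up to an additive constant. -/
def superdifferential [CompleteSpace E] (u : E → ℝ) (x : E) : Set E :=
  {p | ∃ φ : E → ℝ, ContDiff ℝ 1 φ ∧ HasGradientAt φ p x ∧ IsLocalMax (u - φ) x}

/-- The limiting superdifferential of `u` at `x`: limits of elements of the superdifferential of `u`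
at points converging to `x`. It makes the sum rule exact. -/
def limitingSuperdifferential [CompleteSpace E] (u : E → ℝ) (x : E) : Set E :=
  {p | (x, p) ∈ closure {q : E × E | q.2 ∈ superdifferential u q.1}}

section Complete

variable [CompleteSpace E] {u w : E → ℝ} {x p : E}

lemma limitingSuperdifferential_subset_of_isClosed {S : Set (E × E)} (hS : IsClosed S)
    (h : ∀ x, ∀ p ∈ superdifferential u x, (x, p) ∈ S) :
    ∀ x, ∀ p ∈ limitingSuperdifferential u x, (x, p) ∈ S :=
  fun _ _ hp => closure_minimal (fun q hq => h q.1 q.2 hq) hS hp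

lemma mem_superdifferential_of_isLocalMax_sub {φ : E → ℝ} (hφ : ContDiff ℝ 1 φ)
    (hmax : IsLocalMax (u - φ) x) : gradient φ x ∈ superdifferential u x :=
  ⟨φ, hφ, hasGradientAt_of_contDiff hφ x, hmax⟩

lemma mem_superdifferential_of_const_smul {c : ℝ} (hc : 0 < c)
    (hp : p ∈ superdifferential (c • u) x) : c⁻¹ • p ∈ superdifferential u x := by
  obtain ⟨φ, hφ, hgrad, hmax⟩ := hp
  refine ⟨c⁻¹ • φ, hφ.const_smul c⁻¹, hasGradientAt_const_smul c⁻¹ hgrad, ?_⟩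
  filter_upwards [hmax] with y hy
  have key : ∀ z, (u - c⁻¹ • φ) z = c⁻¹ * (c • u - φ) z := fun z => by
    simp only [Pi.sub_apply, Pi.smul_apply, smul_eq_mul]
    field_simp
  rw [key, key]
  gcongr

lemma mem_limitingSuperdifferential_of_const_smul {c : ℝ} (hc : 0 < c)
    (hp : p ∈ limitingSuperdifferential (c • u) x) : c⁻¹ • p ∈ limitingSuperdifferential u x :=
  map_mem_closure (f := fun q : E × E => (q.1, c⁻¹ • q.2)) (by fun_prop) hp
    fun _ hq => mem_superdifferential_of_const_smul hc hq

lemma exists_strict_test_of_mem_superdifferential (hp : p ∈ superdifferential u x) :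
    ∃ φ : E → ℝ, ContDiff ℝ 1 φ ∧ HasGradientAt φ p x ∧
      ∀ᶠ y in 𝓝 x, u y - φ y + ‖y - x‖ ^ 2 ≤ u x - φ x := by
  obtain ⟨φ, hφ, hgrad, hmax⟩ := hp
  refine ⟨φ + fun y => ‖y - x‖ ^ 2, hφ.add (contDiff_norm_sub_sq x), ?_, ?_⟩
  · simpa using hasGradientAt_add hgrad (hasGradientAt_norm_sub_sq x x)
  · filter_upwards [hmax] with y hy
    simp only [Pi.sub_apply] at hy
    simp only [Pi.add_apply, sub_self, norm_zero]
    linarith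

end Complete

section Proper

variable [ProperSpace E] {u w : E → ℝ} {x p : E}

lemma eventually_exists_mem_superdifferential_of_tendstoUniformly {ι : Type*} {l : Filter ι}
    {v : ι → E → ℝ} (hv : TendstoUniformly v u l) (hcont : ∀ᶠ i in l, Continuous (v i))
    (hp : p ∈ superdifferential u x) {V : Set (E × E)} (hV : V ∈ 𝓝 (x, p)) :
    ∀ᶠ i in l, ∃ q ∈ V, q.2 ∈ superdifferential (v i) q.1 := by
  obtain ⟨φ, hφ, hgrad, hstrict⟩ := exists_strict_test_of_mem_superdifferential hp
  have hgraph : ∀ᶠ y in 𝓝 x, (y, gradient φ y) ∈ V :=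
    (continuous_id.prodMk (continuous_gradient hφ)).continuousAt.eventually_mem
      (by simpa [hgrad.gradient] using hV)
  obtain ⟨r, hr, hball⟩ := Metric.nhds_basis_closedBall.eventually_iff.1 (hstrict.and hgraph)
  filter_upwards [hcont, Metric.tendstoUniformly_iff.1 hv (r ^ 2 / 2) (by positivity)]
    with i hi hclose
  have hsphere : ∀ y ∈ Metric.sphere x r, (v i - φ) y < (v i - φ) x := fun y hy => by
    have hle := (hball (Metric.sphere_subset_closedBall hy)).1
    rw [mem_sphere_iff_norm.1 hy] at hle
    simp only [Pi.sub_apply]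
    linarith [(abs_lt.1 (hclose y)).1, (abs_lt.1 (hclose x)).2]
  obtain ⟨y, hy, hmax⟩ := Metric.exists_isLocalMin_mem_ball (β := ℝᵒᵈ) (f := v i - φ)
    (hi.sub hφ.continuous).continuousOn (Metric.mem_closedBall_self hr.le) hsphere
  exact ⟨_, (hball (Metric.ball_subset_closedBall hy)).2,
    mem_superdifferential_of_isLocalMax_sub hφ hmax⟩

lemma mem_superdifferential_of_isLocalMax_doubling {φ : E → ℝ} (hφ : ContDiff ℝ 1 φ) {N : ℝ}
    {a b : E}
    (hmax : IsLocalMax (fun q : E × E => u q.1 + (w - φ) q.2 - N / 2 * ‖q.1 - q.2‖ ^ 2) (a, b)) :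
    N • (a - b) ∈ superdifferential u a ∧
      gradient φ b - N • (a - b) ∈ superdifferential w b := by
  have hquad : ∀ c : E, ContDiff ℝ 1 ((N / 2) • fun y : E => ‖y - c‖ ^ 2) := fun c =>
    (contDiff_norm_sub_sq c).const_smul (N / 2)
  have hgrad : ∀ c y : E, HasGradientAt ((N / 2) • fun y : E => ‖y - c‖ ^ 2) (N • (y - c)) y :=
    fun c y => by
      simpa [smul_smul] using hasGradientAt_const_smul (N / 2) (hasGradientAt_norm_sub_sq c y)
  constructor
  · refine ⟨_, hquad b, hgrad b a, ?_⟩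
    filter_upwards [hmax.comp_continuous (g := fun y => (y, b)) (b := a) (by fun_prop)] with y hy
    simp only [Function.comp_apply, Pi.sub_apply] at hy
    simp only [Pi.sub_apply, Pi.smul_apply, smul_eq_mul]
    linarith
  · refine ⟨φ + (N / 2) • fun y => ‖y - a‖ ^ 2, hφ.add (hquad a), ?_, ?_⟩
    · rw [sub_eq_add_neg, ← smul_neg, neg_sub]
      exact hasGradientAt_add (hasGradientAt_of_contDiff hφ b) (hgrad a b)
    · filter_upwards [hmax.comp_continuous (g := fun y => (a, y)) (b := b) (by fun_prop)] with y hy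
      simp only [Function.comp_apply, Pi.sub_apply] at hy
      simp only [Pi.sub_apply, Pi.add_apply, Pi.smul_apply, smul_eq_mul, norm_sub_rev _ a]
      linarith

lemma exists_approx_mem_superdifferential_of_add {K : NNReal} (hu : LipschitzWith K u)
    (hw : Continuous w) (hp : p ∈ superdifferential (u + w) x) {δ : ℝ} (hδ : 0 < δ) :
    ∃ a b q q' : E, ‖a - x‖ < δ ∧ ‖b - x‖ < δ ∧ ‖q‖ ≤ 2 * K ∧ ‖q + q' - p‖ < δ ∧
      q ∈ superdifferential u a ∧ q' ∈ superdifferential w b := by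
  obtain ⟨φ, hφ, hgrad, hstrict⟩ := exists_strict_test_of_mem_superdifferential hp
  have hgrad_near : ∀ᶠ y in 𝓝 x, ‖gradient φ y - p‖ < δ := by
    simpa only [dist_eq_norm, hgrad.gradient] using
      Metric.tendsto_nhds.1 ((continuous_gradient hφ).tendsto x) δ hδ
  have hnear : ∀ᶠ y in 𝓝 x, ‖y - x‖ < δ :=
    mem_of_superset (Metric.ball_mem_nhds x hδ) fun _ => mem_ball_iff_norm.1
  obtain ⟨r, hr, hball⟩ := Metric.nhds_basis_closedBall.eventually_iff.1
    (hstrict.and (hnear.and hgrad_near))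
  have hlarge : ∀ c t : ℝ, 0 < t → ∀ᶠ N : ℝ in atTop, c / N < t := fun c t ht =>
    (tendsto_const_nhds.div_atTop tendsto_id).eventually_lt_const ht
  obtain ⟨N, hN, hNa, hNb⟩ := ((eventually_gt_atTop 0).and
    ((hlarge (2 * K) (r / 2) (by positivity)).and
      (hlarge (K * (2 * K)) ((r / 2) ^ 2) (by positivity)))).exists
  obtain ⟨a, b, hab, hbx, hmax⟩ := exists_isMaxOn_doubling (ψ := w - φ) hu
    (hw.sub hφ.continuous) hr.le
    (fun y hy => by simpa [add_sub_assoc] using (hball hy).1) hN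
  have hab' : ‖a - b‖ ≤ 2 * K / N := (le_div_iff₀' hN).2 hab
  have hb : ‖b - x‖ < r / 2 := by
    refine lt_of_pow_lt_pow_left₀ 2 (by positivity) (lt_of_le_of_lt ?_ hNb)
    calc ‖b - x‖ ^ 2 ≤ K * ‖a - b‖ := hbx
      _ ≤ K * (2 * K / N) := by gcongr
      _ = K * (2 * K) / N := by ring
  have ha_mem : a ∈ Metric.ball x r :=
    mem_ball_iff_norm.2 (by linarith [norm_sub_le_norm_sub_add_norm_sub a b x])
  have hb_mem : b ∈ Metric.ball x r := mem_ball_iff_norm.2 (by linarith)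
  obtain ⟨hq, hq'⟩ := mem_superdifferential_of_isLocalMax_doubling hφ
    (hmax.isLocalMax (prod_mem_nhds (Metric.closedBall_mem_nhds_of_mem ha_mem)
      (Metric.closedBall_mem_nhds_of_mem hb_mem)))
  refine ⟨a, b, _, _, (hball (Metric.ball_subset_closedBall ha_mem)).2.1,
    (hball (Metric.ball_subset_closedBall hb_mem)).2.1, ?_, ?_, hq, hq'⟩
  · rwa [norm_smul, Real.norm_of_nonneg hN.le]
  · rw [add_sub_cancel]
    exact (hball (Metric.ball_subset_closedBall hb_mem)).2.2

theorem exists_mem_limitingSuperdifferential_of_add {K : NNReal} (hu : LipschitzWith K u)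
    (hw : Continuous w) (hp : p ∈ superdifferential (u + w) x) :
    ∃ q ∈ limitingSuperdifferential u x, ∃ q' ∈ limitingSuperdifferential w x, q + q' = p := by
  choose a b q q' ha hb hqK hpq hq hq' using fun k : ℕ =>
    exists_approx_mem_superdifferential_of_add hu hw hp (Nat.one_div_pos_of_nat (n := k))
  have hlim : ∀ {y : ℕ → E} {z : E}, (∀ k, ‖y k - z‖ < 1 / ((k : ℝ) + 1)) →
      Tendsto y atTop (𝓝 z) := fun h => tendsto_iff_norm_sub_tendsto_zero.2 <|
    squeeze_zero (fun _ => norm_nonneg _) (fun k => (h k).le)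
      tendsto_one_div_add_atTop_nhds_zero_nat
  obtain ⟨q₀, -, k, hk, hq₀⟩ := (isCompact_closedBall (0 : E) (2 * K)).tendsto_subseq
    fun k => mem_closedBall_zero_iff.2 (hqK k)
  have hq₀' : Tendsto (q' ∘ k) atTop (𝓝 (p - q₀)) := by
    simpa [Function.comp_def] using ((hlim hpq).comp hk.tendsto_atTop).sub hq₀
  refine ⟨q₀, ?_, p - q₀, ?_, add_sub_cancel _ _⟩
  · exact mem_closure_of_tendsto (((hlim ha).comp hk.tendsto_atTop).prodMk_nhds hq₀)
      (Eventually.of_forall fun i => hq (k i))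
  · exact mem_closure_of_tendsto (((hlim hb).comp hk.tendsto_atTop).prodMk_nhds hq₀')
      (Eventually.of_forall fun i => hq' (k i))

/-- Slide the smoothed cone of slope `R' > R` with vertex `x` down until it touches `u` from above:
its slope at the touching point `m` is at most `R`, which confines `m` to a neighbourhood of `x`. -/
lemma exists_near_forall_sub_le_of_norm_superdifferential_le {R R' : ℝ} (hu : Continuous u)
    (hbdd : BddAbove (range u)) (h : ∀ x, ∀ p ∈ superdifferential u x, ‖p‖ ≤ R) (hR : 0 ≤ R)
    (hRR' : R < R') (x : E) {η : ℝ} (hη : 0 < η) :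
    ∃ m, ‖m - x‖ ≤ R * η / (R' - R) ∧ ∀ y, u y - R' * √(‖y - x‖ ^ 2 + η ^ 2) ≤ u m := by
  have hR' : 0 < R' := hR.trans_lt hRR'
  have hle_sqrt : ∀ y : E, ‖y - x‖ ≤ √(‖y - x‖ ^ 2 + η ^ 2) := fun y =>
    Real.le_sqrt_of_sq_le (by nlinarith)
  obtain ⟨B, hB⟩ := hbdd
  have hφ : ContDiff ℝ 1 (R' • fun y : E => √(‖y - x‖ ^ 2 + η ^ 2)) :=
    (contDiff_sqrt_norm_sub_sq_add x hη).const_smul R'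
  have hbot : Tendsto (u - R' • fun y : E => √(‖y - x‖ ^ 2 + η ^ 2)) (cocompact E) atBot := by
    have hnorm : Tendsto (fun y : E => B - R' * dist y x) (cocompact E) atBot :=
      tendsto_atBot_add_const_left _ _ <| tendsto_neg_atTop_atBot.comp <|
        (tendsto_dist_right_cocompact_atTop x).const_mul_atTop hR'
    refine tendsto_atBot_mono (fun y => ?_) hnorm
    have := mul_le_mul_of_nonneg_left (hle_sqrt y) hR'.le
    simp only [Pi.sub_apply, Pi.smul_apply, smul_eq_mul, dist_eq_norm]
    linarith [hB (mem_range_self y)]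
  obtain ⟨m, hm⟩ := (hu.sub hφ.continuous).exists_forall_ge hbot
  have hgrad := h m _ ⟨_, hφ,
    hasGradientAt_const_smul R' (hasGradientAt_sqrt_norm_sub_sq_add x hη m),
    Eventually.of_forall hm⟩
  have hslope : R' * ‖m - x‖ ≤ R * √(‖m - x‖ ^ 2 + η ^ 2) := by
    rw [norm_smul, norm_smul, norm_inv, Real.norm_of_nonneg hR'.le,
      Real.norm_of_nonneg (Real.sqrt_nonneg _), inv_mul_eq_div, ← mul_div_assoc] at hgrad
    exact (div_le_iff₀ (by positivity)).1 hgrad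
  have hsqrt_le : √(‖m - x‖ ^ 2 + η ^ 2) ≤ ‖m - x‖ + η :=
    Real.sqrt_le_iff.2 ⟨by positivity, by nlinarith [norm_nonneg (m - x)]⟩
  refine ⟨m, ?_, fun y => (hm y).trans (sub_le_self _ ?_)⟩
  · rw [le_div_iff₀ (sub_pos.2 hRR')]
    nlinarith
  · have : 0 ≤ √(‖m - x‖ ^ 2 + η ^ 2) := Real.sqrt_nonneg _
    exact mul_nonneg hR'.le this

theorem lipschitzWith_of_norm_superdifferential_le {R : NNReal} (hu : Continuous u)
    (hbdd : BddAbove (range u)) (h : ∀ x, ∀ p ∈ superdifferential u x, ‖p‖ ≤ R) :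
    LipschitzWith R u := by
  refine LipschitzWith.of_le_add_mul R fun y x => ?_
  have hsteeper : ∀ R' > (R : ℝ), u y ≤ u x + R' * dist y x := fun R' hR' => by
    choose! m hm hle using fun (η : ℝ) (hη : 0 < η) =>
      exists_near_forall_sub_le_of_norm_superdifferential_le hu hbdd h R.2 hR' x hη
    have hm_tendsto : Tendsto m (𝓝[>] 0) (𝓝 x) := by
      refine tendsto_iff_norm_sub_tendsto_zero.2 <| squeeze_zero'
        (Eventually.of_forall fun _ => norm_nonneg _)
        (eventually_mem_nhdsWithin.mono fun η hη => hm η hη) ?_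
      exact (Continuous.tendsto' (by fun_prop) 0 0 (by simp)).mono_left nhdsWithin_le_nhds
    have hcone : Tendsto (fun η : ℝ => u y - R' * √(‖y - x‖ ^ 2 + η ^ 2)) (𝓝[>] 0)
        (𝓝 (u y - R' * dist y x)) :=
      (Continuous.tendsto' (by fun_prop) 0 _ (by simp [dist_eq_norm])).mono_left nhdsWithin_le_nhds
    linarith [le_of_tendsto_of_tendsto hcone ((hu.tendsto x).comp hm_tendsto)
      (eventually_mem_nhdsWithin.mono fun η hη => hle η hη y)]
  have hlim : Tendsto (fun R' : ℝ => u x + R' * dist y x) (𝓝[>] (R : ℝ))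
      (𝓝 (u x + R * dist y x)) :=
    (Continuous.tendsto (by fun_prop) _).mono_left nhdsWithin_le_nhds
  exact ge_of_tendsto hlim (eventually_mem_nhdsWithin.mono hsteeper)

end Proper

end Superdifferential

section OneDimensional

lemma antitone_of_forall_not_isLocalMax {g : ℝ → ℝ} (hg : Continuous g)
    (hbot : Tendsto g atTop atBot) (hmax : ∀ t, ¬ IsLocalMax g t) : Antitone g := by
  intro s t hst
  by_contra! hlt
  have hst : s < t := hst.lt_of_ne (by rintro rfl; exact hlt.false)
  obtain ⟨T, htT, hT⟩ := ((eventually_gt_atTop t).and (hbot.eventually_lt_atBot (g t))).exists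
  have ht : t ∈ Icc s T := ⟨hst.le, htT.le⟩
  obtain ⟨c, hc, hcmax⟩ := isCompact_Icc.exists_isMaxOn ⟨t, ht⟩ hg.continuousOn
  have hgc : g t ≤ g c := hcmax ht
  have hsc : s < c := hc.1.lt_of_ne (by rintro rfl; exact hgc.not_gt hlt)
  have hcT : c < T := hc.2.lt_of_ne (by rintro rfl; exact hgc.not_gt hT)
  exact hmax c (hcmax.isLocalMax (Icc_mem_nhds hsc hcT))

variable {E : Type*} [NormedAddCommGroup E] [InnerProductSpace ℝ E] [CompleteSpace E]
  {u : E → ℝ} {p : E}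

lemma antitone_of_forall_notMem_superdifferential (hp0 : p ≠ 0)
    (hspan : Submodule.span ℝ {p} = ⊤) (hu : Continuous u) (hbdd : BddAbove (range u))
    (hp : ∀ x, p ∉ superdifferential u x) :
    Antitone (fun t : ℝ => u (t • p) - t * ‖p‖ ^ 2) := by
  have hpp : 0 < ‖p‖ ^ 2 := by positivity
  obtain ⟨B, hB⟩ := hbdd
  refine antitone_of_forall_not_isLocalMax (by fun_prop) ?_ fun t hmax => hp (t • p) ?_
  · refine tendsto_atBot_mono (fun t => sub_le_sub_right (hB (mem_range_self (t • p))) _) ?_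
    exact tendsto_atBot_add_const_left _ _ <| tendsto_neg_atTop_atBot.comp <|
      tendsto_id.atTop_mul_const hpp
  · set coord : E → ℝ := fun y => inner ℝ p y / ‖p‖ ^ 2
    have hcoord_smul : ∀ s : ℝ, coord (s • p) = s := fun s => by
      simp only [coord, inner_smul_right, real_inner_self_eq_norm_sq]
      field_simp
    have hsmul_coord : ∀ y : E, coord y • p = y := fun y => by
      obtain ⟨s, rfl⟩ := Submodule.mem_span_singleton.1 (hspan ▸ Submodule.mem_top : y ∈ _)
      rw [hcoord_smul]
    refine ⟨fun y => inner ℝ p y, (innerSL ℝ p).contDiff,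
      (InnerProductSpace.toDual ℝ E p).hasFDerivAt, ?_⟩
    rw [← hcoord_smul t] at hmax
    convert hmax.comp_continuous (g := coord) (b := t • p) (by fun_prop) using 1
    ext y
    simp only [Function.comp_apply, hsmul_coord, Pi.sub_apply, coord]
    field_simp

lemma lipschitzWith_of_forall_notMem_superdifferential (hp0 : p ≠ 0)
    (hspan : Submodule.span ℝ {p} = ⊤) (hu : Continuous u) (hbdd : BddAbove (range u))
    (hbdd' : BddAbove (range (-u))) (hp : ∀ x, p ∉ superdifferential u x)
    (hp' : ∀ x, p ∉ superdifferential (-u) x) : LipschitzWith ‖p‖₊ u := by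
  have hanti := antitone_of_forall_notMem_superdifferential hp0 hspan hu hbdd hp
  have hanti' := antitone_of_forall_notMem_superdifferential hp0 hspan hu.neg hbdd' hp'
  refine LipschitzWith.of_le_add_mul _ fun x y => ?_
  obtain ⟨s, rfl⟩ := Submodule.mem_span_singleton.1 (hspan ▸ Submodule.mem_top : x ∈ _)
  obtain ⟨t, rfl⟩ := Submodule.mem_span_singleton.1 (hspan ▸ Submodule.mem_top : y ∈ _)
  rw [dist_eq_norm, ← sub_smul, norm_smul, coe_nnnorm, Real.norm_eq_abs]
  rcases le_total t s with hts | hst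
  · rw [abs_of_nonneg (sub_nonneg.2 hts)]
    have := hanti hts
    dsimp only at this
    linarith
  · rw [abs_of_nonpos (sub_nonpos.2 hst)]
    have := hanti' hst
    simp only [Pi.neg_apply] at this
    linarith

end OneDimensional

section Coercivity

variable {X E : Type*} [TopologicalSpace X] [PreconnectedSpace X] [NormedAddCommGroup E]
  [NormedSpace ℝ E] {G : X → E → ℝ}

/-- Spheres are connected unless `E` is a line, in which case they are pairs of opposite points. -/
lemma forall_pos_or_exists_span_forall_neg (hG : Continuous fun q : X × E => G q.1 q.2) {R : ℝ}
    (hne : ∀ x p, R ≤ ‖p‖ → G x p ≠ 0)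
    (hopp : ∀ x p, R ≤ ‖p‖ → G x p < 0 → 0 < G x (-p)) :
    (∀ x p, R ≤ ‖p‖ → 0 < G x p) ∨
      ∃ p ≠ 0, R ≤ ‖p‖ ∧ Submodule.span ℝ {p} = ⊤ ∧ ∀ x, G x p < 0 := by
  by_cases hall : ∀ x p, R ≤ ‖p‖ → 0 ≤ G x p
  · exact Or.inl fun x p hp => (hall x p hp).lt_of_ne (hne x p hp).symm
  push Not at hall
  obtain ⟨x₀, p, hp, hlt⟩ := hall
  have hrank : ¬ 1 < Module.rank ℝ E := fun hrank =>
    (hopp x₀ p hp hlt).not_gt <| (isPreconnected_sphere hrank 0 ‖p‖).gt_of_ne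
      (f := G x₀) (by fun_prop)
      (fun q hq => hne x₀ q (hp.trans_eq (mem_sphere_zero_iff_norm.1 hq).symm))
      ⟨p, by simp, hlt⟩ (by simp)
  have hp0 : p ≠ 0 := by
    rintro rfl
    exact (hopp x₀ 0 hp hlt).not_gt (by simpa using hlt)
  have : Nontrivial E := nontrivial_of_ne p 0 hp0
  have hrank_one : Module.rank ℝ E = 1 :=
    le_antisymm (not_lt.1 hrank) (Cardinal.one_le_iff_pos.2 rank_pos)
  have hspan : Submodule.span ℝ {p} = ⊤ := (finrank_eq_one_iff_of_nonzero p hp0).1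
    (Module.rank_eq_one_iff_finrank_eq_one.1 hrank_one)
  exact Or.inr ⟨p, hp0, hp, hspan, fun x => isPreconnected_univ.gt_of_ne
    (f := fun x => G x p) (by fun_prop) (fun x _ => hne x p hp) ⟨x₀, mem_univ x₀, hlt⟩
    (mem_univ x)⟩

lemma forall_lt_or_exists_span_opposite_signs (hG : Continuous fun q : X × E => G q.1 q.2)
    (hconv : ∀ x, ConvexOn ℝ univ (G x)) (hbdd : BddBelow (range fun x => G x 0))
    (hcoer : ∀ C, ∃ R, ∀ x p, R ≤ ‖p‖ → C ≤ |G x p|) (A : ℝ) :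
    (∃ R, ∀ x p, R ≤ ‖p‖ → A < G x p) ∨
      ∃ p ≠ 0, Submodule.span ℝ {p} = ⊤ ∧ (∀ x, A < G x p) ∧ ∀ x, G x (-p) < -A := by
  obtain ⟨D, hD⟩ := hbdd
  obtain ⟨R, hR⟩ := hcoer (|A| + 2 * |D| + 1)
  have hA := abs_le.1 (le_refl |A|)
  have hD' := abs_le.1 (le_refl |D|)
  have hpos : ∀ x p, R ≤ ‖p‖ → 0 < G x p → A < G x p := fun x p hp h => by
    linarith [abs_of_pos h ▸ hR x p hp]
  have hneg : ∀ x p, R ≤ ‖p‖ → G x p < 0 → G x p < -A ∧ 0 < G x (-p) := fun x p hp h => by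
    have hmid := (hconv x).2 (mem_univ p) (mem_univ (-p)) (one_half_pos (α := ℝ)).le
      one_half_pos.le (add_halves 1)
    rw [smul_neg, add_neg_cancel, smul_eq_mul, smul_eq_mul] at hmid
    have hDx : D ≤ G x 0 := hD (mem_range_self x)
    have hRx := abs_of_neg h ▸ hR x p hp
    constructor <;> linarith
  have hne : ∀ x p, R ≤ ‖p‖ → G x p ≠ 0 := fun x p hp h => by
    have hRx := hR x p hp
    rw [h, abs_zero] at hRx
    linarith
  rcases forall_pos_or_exists_span_forall_neg hG hne fun x p hp h => (hneg x p hp h).2 with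
    hall | ⟨p, hp0, hp, hspan, hlt⟩
  · exact Or.inl ⟨R, fun x p hp => hpos x p hp (hall x p hp)⟩
  · refine Or.inr ⟨-p, neg_ne_zero.2 hp0, ?_, fun x => ?_, fun x => ?_⟩
    · rw [← hspan, ← Set.neg_singleton, Submodule.span_neg]
    · exact hpos x _ (by rwa [norm_neg]) (hneg x p hp (hlt x)).2
    · simpa using (hneg x p hp (hlt x)).1

lemma exists_forall_le_abs_of_le_sq_div_sub {X E : Type*} [SeminormedAddCommGroup E]
    {g b : X → E → ℝ} (hb : ∀ x p, 0 ≤ b x p)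
    (hg : ∀ C, ∃ R, ∀ x p, R ≤ ‖p‖ → C ≤ g x p ^ 2 / (2 * ‖p‖) - b x p) (C : ℝ) :
    ∃ R, ∀ x p, R ≤ ‖p‖ → C ≤ |g x p| := by
  obtain ⟨R, hR⟩ := hg 1
  refine ⟨max R (C ^ 2 + 1), fun x p hp => ?_⟩
  have hp₀ : C ^ 2 + 1 ≤ ‖p‖ := (le_max_right _ _).trans hp
  have hone : 1 ≤ g x p ^ 2 / (2 * ‖p‖) := by
    linarith [hR x p ((le_max_left _ _).trans hp), hb x p]
  rw [one_le_div (by nlinarith)] at hone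
  exact (le_abs_self C).trans (sq_le_sq.1 (by nlinarith))

end Coercivity

section Compactness

lemma tendstoUniformlyOn_of_lipschitzWith {X Y ι : Type*} [PseudoMetricSpace X]
    [PseudoMetricSpace Y] {l : Filter ι} {v : ι → X → Y} {u : X → Y} {K : NNReal} {Q : Set X}
    (hQ : IsCompact Q) (hv : ∀ᶠ i in l, LipschitzWith K (v i)) (hu : LipschitzWith K u)
    (hlim : ∀ x, Tendsto (fun i => v i x) l (𝓝 (u x))) : TendstoUniformlyOn v u l Q := by
  refine Metric.tendstoUniformlyOn_iff.2 fun η hη => ?_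
  obtain ⟨t, -, ht, hQt⟩ := hQ.finite_cover_balls (show 0 < η / (3 * (K + 1)) by positivity)
  have hnet : ∀ᶠ i in l, ∀ y ∈ t, dist (u y) (v i y) < η / 3 :=
    (eventually_all_finite ht).2 fun y _ => by
      simpa only [dist_comm] using (Metric.tendsto_nhds.1 (hlim y)) (η / 3) (by positivity)
  filter_upwards [hnet, hv] with i hi hvi x hx
  obtain ⟨y, hy, hxy⟩ := mem_iUnion₂.1 (hQt hx)
  have hKxy : K * dist x y ≤ η / 3 := by
    rw [Metric.mem_ball, lt_div_iff₀ (by positivity)] at hxy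
    linarith [dist_nonneg (x := x) (y := y)]
  calc dist (u x) (v i x)
      ≤ dist (u x) (u y) + dist (u y) (v i y) + dist (v i y) (v i x) := dist_triangle4 ..
    _ < η / 3 + η / 3 + η / 3 := by
        have hvyx := hvi.dist_le_mul y x
        rw [dist_comm y x] at hvyx
        linarith [hi y hy, hu.dist_le_mul x y]
    _ = η := by ring

lemma exists_tendstoUniformly_of_forall_ultrafilter {X Y ι : Type*} [UniformSpace Y]
    {l : Filter ι} [l.NeBot] {v : ι → X → Y} {P : (X → Y) → Prop}
    (hex : ∀ 𝒰 : Ultrafilter ι, ↑𝒰 ≤ l → ∃ u, P u ∧ TendstoUniformly v u 𝒰)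
    (huniq : ∀ 𝒰 𝒱 : Ultrafilter ι, ↑𝒰 ≤ l → ↑𝒱 ≤ l → ∀ u w,
      P u → P w → TendstoUniformly v u 𝒰 → TendstoUniformly v w 𝒱 → u = w) :
    ∃ u, P u ∧ TendstoUniformly v u l := by
  obtain ⟨u, hPu, hu⟩ := hex (Ultrafilter.of l) (Ultrafilter.of_le l)
  refine ⟨u, hPu, tendstoUniformly_iff_tendsto.2 (tendsto_iff_ultrafilter _ _ _ |>.2 ?_)⟩
  intro 𝒲 h𝒲
  have hfst : ↑(𝒲.map Prod.fst) ≤ l := (tendsto_fst.mono_left h𝒲)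
  obtain ⟨w, hPw, hw⟩ := hex (𝒲.map Prod.fst) hfst
  rw [huniq _ _ (Ultrafilter.of_le l) hfst u w hPu hPw hu hw]
  exact (tendstoUniformly_iff_tendsto.1 hw).mono_left (le_prod.2 ⟨tendsto_map, tendsto_top⟩)

end Compactness

section DifferenceQuotient

lemma continuous_deriv_of_contDiff {E : Type*} [NormedAddCommGroup E] [NormedSpace ℝ E]
    {f : E → ℝ → ℝ} (hf : ContDiff ℝ 1 fun q : E × ℝ => f q.1 q.2) :
    Continuous fun q : E × ℝ => deriv (f q.1) q.2 := by
  have hfderiv : Continuous fun q : E × ℝ => fderiv ℝ (f q.1) q.2 :=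
    Continuous.fderiv_one (by fun_prop) continuous_snd
  simpa only [fderiv_apply_one_eq_deriv] using hfderiv.clm_apply (continuous_const (y := (1 : ℝ)))

lemma eventually_forall_abs_div_sub_deriv_mul_le {X : Type*} [TopologicalSpace X] {Q : Set X}
    (hQ : IsCompact Q) {f : X → ℝ → ℝ} (hdiff : ∀ x, Differentiable ℝ (f x))
    (hderiv : Continuous fun q : X × ℝ => deriv (f q.1) q.2) (B : ℝ) {κ : ℝ} (hκ : 0 < κ) :
    ∀ᶠ ε in 𝓝[>] (0 : ℝ), ∀ x ∈ Q, ∀ r, |r| ≤ B →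
      |(f x (ε * r) - f x 0) / ε - deriv (f x) 0 * r| ≤ κ * |r| := by
  have hclose : ∀ᶠ t in 𝓝 (0 : ℝ), ∀ x ∈ Q, |deriv (f x) t - deriv (f x) 0| < κ := by
    refine hQ.eventually_forall_of_forall_eventually fun x _ => ?_
    have hcont : Continuous fun q : ℝ × X => |deriv (f q.2) q.1 - deriv (f q.2) 0| :=
      ((hderiv.comp continuous_swap).sub
        (hderiv.comp (continuous_snd.prodMk continuous_const))).abs
    exact (hcont.tendsto (0, x)).eventually_lt_const (by simpa using hκ)
  obtain ⟨ρ, hρ, hball⟩ := Metric.eventually_nhds_iff_ball.1 hclose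
  have hsmall : ∀ᶠ ε in 𝓝 (0 : ℝ), |ε| * |B| < ρ :=
    (Continuous.tendsto (by fun_prop) 0).eventually_lt_const (by simpa using hρ)
  filter_upwards [nhdsWithin_le_nhds hsmall, self_mem_nhdsWithin] with ε hεB (hε : 0 < ε) x hx r hr
  have hεr : ε * r ∈ Metric.ball 0 ρ := by
    rw [mem_ball_zero_iff, Real.norm_eq_abs, abs_mul]
    exact (mul_le_mul_of_nonneg_left (hr.trans (le_abs_self B)) (abs_nonneg ε)).trans_lt hεB
  have hmean : |f x (ε * r) - deriv (f x) 0 * (ε * r) - f x 0| ≤ κ * |ε * r| := by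
    simpa using (convex_ball (0 : ℝ) ρ).norm_image_sub_le_of_norm_hasDerivWithin_le
      (f := fun t => f x t - deriv (f x) 0 * t) (C := κ)
      (fun t _ => ((hdiff x t).hasDerivAt.sub
        (by simpa using (hasDerivAt_id t).const_mul (deriv (f x) 0))).hasDerivWithinAt)
      (fun t ht => (hball t ht x hx).le) (Metric.mem_ball_self hρ) hεr
  calc |(f x (ε * r) - f x 0) / ε - deriv (f x) 0 * r|
      = |f x (ε * r) - deriv (f x) 0 * (ε * r) - f x 0| / ε := by
        rw [← abs_of_pos hε, ← abs_div, abs_of_pos hε]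
        congr 1
        field_simp
        ring
    _ ≤ κ * |ε * r| / ε := by gcongr
    _ = κ * |r| := by
        rw [abs_mul, abs_of_pos hε]
        field_simp

lemma eventually_forall_le_add_of_div_le_div {X : Type*} [TopologicalSpace X] {Q : Set X}
    (hQ : IsCompact Q) {f : X → ℝ → ℝ} (hdiff : ∀ x, Differentiable ℝ (f x))
    (hderiv : Continuous fun q : X × ℝ => deriv (f q.1) q.2) (hpos : ∀ x, 0 < deriv (f x) 0)
    (B : ℝ) {η : ℝ} (hη : 0 < η) :
    ∀ᶠ q in 𝓝[>] (0 : ℝ) ×ˢ 𝓝[>] (0 : ℝ), ∀ x ∈ Q, ∀ r r', |r| ≤ B → |r'| ≤ B →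
      (f x (q.1 * r) - f x 0) / q.1 ≤ (f x (q.2 * r') - f x 0) / q.2 → r ≤ r' + η := by
  have hderiv₀ : Continuous fun x => deriv (f x) 0 :=
    hderiv.comp (continuous_id.prodMk continuous_const)
  obtain ⟨a, ha, haQ⟩ : ∃ a > 0, ∀ x ∈ Q, a ≤ deriv (f x) 0 :=
    hQ.exists_forall_le' hderiv₀.continuousOn fun x _ => hpos x
  have hκ : 0 < a * η / (2 * (|B| + 1)) := by positivity
  have happrox := eventually_forall_abs_div_sub_deriv_mul_le hQ hdiff hderiv B hκ
  have herror : ∀ r, |r| ≤ B → a * η / (2 * (|B| + 1)) * |r| ≤ a * η / 2 := fun r hr => by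
    calc a * η / (2 * (|B| + 1)) * |r| ≤ a * η / (2 * (|B| + 1)) * (|B| + 1) := by
          gcongr
          linarith [le_abs_self B]
      _ = a * η / 2 := by field_simp
  filter_upwards [happrox.prod_mk happrox] with ⟨ε, δ⟩ ⟨hε, hδ⟩ x hx r r' hr hr' hle
  have hεr := (abs_le.1 (hε x hx r hr)).1
  have hδr' := (abs_le.1 (hδ x hx r' hr')).2
  have haη : a * η ≤ deriv (f x) 0 * η := mul_le_mul_of_nonneg_right (haQ x hx) hη.le
  refine le_of_mul_le_mul_left (a := deriv (f x) 0) ?_ (hpos x)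
  simp only at hle
  linarith [herror r hr, herror r' hr']

end DifferenceQuotient

section ViscositySolutions

variable {n : ℕ}

local notation "𝔼" n:arg => EuclideanSpace ℝ (Fin n)

section Basic

variable {E : 𝔼 n → ℝ → 𝔼 n → ℝ} {u : 𝔼 n → ℝ}

lemma viscSub_iff_forall_mem_superdifferential :
    ViscSub E u ↔ ∀ x, ∀ p ∈ superdifferential u x, E x (u x) p ≤ 0 := by
  refine ⟨fun h x p hp => ?_, fun h φ hφ x hmax =>
    h x _ (mem_superdifferential_of_isLocalMax_sub hφ hmax)⟩
  obtain ⟨φ, hφ, hgrad, hmax⟩ := hp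
  exact hgrad.gradient ▸ h φ hφ x hmax

lemma viscSuper_iff_forall_mem_superdifferential_neg :
    ViscSuper E u ↔ ∀ x, ∀ p ∈ superdifferential (-u) x, 0 ≤ E x (u x) (-p) := by
  refine ⟨fun h x p hp => ?_, fun h φ hφ x hmin => ?_⟩
  · obtain ⟨φ, hφ, hgrad, hmax⟩ := hp
    rw [← (hasGradientAt_neg hgrad).gradient]
    refine h (-φ) hφ.neg x ?_
    filter_upwards [hmax] with y hy
    simp only [Pi.sub_apply, Pi.neg_apply] at hy ⊢
    linarith
  · rw [← neg_neg (gradient φ x)]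
    refine h x _ ⟨-φ, hφ.neg, hasGradientAt_neg (hasGradientAt_of_contDiff hφ x), ?_⟩
    filter_upwards [hmin] with y hy
    simp only [Pi.sub_apply, Pi.neg_apply] at hy ⊢
    linarith

lemma viscSuper_iff_viscSub_neg :
    ViscSuper E u ↔ ViscSub (fun x r p => -E x (-r) (-p)) (-u) := by
  simp [viscSuper_iff_forall_mem_superdifferential_neg, viscSub_iff_forall_mem_superdifferential]

lemma ViscSub.nonpos_of_mem_limitingSuperdifferential (h : ViscSub E u)
    (hE : Continuous fun q : 𝔼 n × 𝔼 n => E q.1 (u q.1) q.2) {x p : 𝔼 n}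
    (hp : p ∈ limitingSuperdifferential u x) : E x (u x) p ≤ 0 :=
  limitingSuperdifferential_subset_of_isClosed
    (S := {q | E q.1 (u q.1) q.2 ≤ 0}) (isClosed_le hE continuous_const)
    (viscSub_iff_forall_mem_superdifferential.1 h) x p hp

lemma ViscSuper.nonneg_of_mem_limitingSuperdifferential_neg (h : ViscSuper E u)
    (hE : Continuous fun q : 𝔼 n × 𝔼 n => E q.1 (u q.1) q.2) {x p : 𝔼 n}
    (hp : p ∈ limitingSuperdifferential (-u) x) : 0 ≤ E x (u x) (-p) := by
  have hE' : Continuous fun q : 𝔼 n × 𝔼 n => -E q.1 (u q.1) (-q.2) :=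
    (hE.comp (continuous_fst.prodMk continuous_snd.neg)).neg
  simpa using (viscSuper_iff_viscSub_neg.1 h).nonpos_of_mem_limitingSuperdifferential
    (by simpa using hE') hp

end Basic

section Stability

variable {ι : Type*} {l : Filter ι} [l.NeBot] {E : ι → 𝔼 n → ℝ → 𝔼 n → ℝ} {E₀ : 𝔼 n → ℝ → 𝔼 n → ℝ}
  {v : ι → 𝔼 n → ℝ} {u : 𝔼 n → ℝ}

lemma ViscSub.of_tendstoUniformly
    (hE : ∀ x r p, Tendsto (fun q : ι × 𝔼 n × ℝ × 𝔼 n => E q.1 q.2.1 q.2.2.1 q.2.2.2)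
      (l ×ˢ 𝓝 (x, r, p)) (𝓝 (E₀ x r p)))
    (hv : TendstoUniformly v u l) (hcont : ∀ᶠ i in l, Continuous (v i))
    (hsub : ∀ᶠ i in l, ViscSub (E i) (v i)) : ViscSub E₀ u := by
  refine viscSub_iff_forall_mem_superdifferential.2 fun x p hp => ?_
  by_contra! hpos
  have hu : Continuous u := hv.continuous hcont.frequently
  have hvalue : Tendsto (fun q : ι × 𝔼 n × 𝔼 n => v q.1 q.2.1) (l ×ˢ 𝓝 (x, p)) (𝓝 (u x)) :=
    TendstoUniformly.tendsto_comp (F := fun q : ι × 𝔼 n × 𝔼 n => v q.1)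
      (fun U hU => tendsto_fst.eventually (hv U hU)) hu.continuousAt
      ((continuous_fst.tendsto (x, p)).comp tendsto_snd)
  have hgraph : Tendsto (fun q : ι × 𝔼 n × 𝔼 n => E q.1 q.2.1 (v q.1 q.2.1) q.2.2)
      (l ×ˢ 𝓝 (x, p)) (𝓝 (E₀ x (u x) p)) :=
    (hE x (u x) p).comp <| tendsto_fst.prodMk <|
      ((continuous_fst.tendsto (x, p)).comp tendsto_snd).prodMk_nhds <|
        hvalue.prodMk_nhds ((continuous_snd.tendsto (x, p)).comp tendsto_snd)
  obtain ⟨P, hP, Q, hQ, hPQ⟩ := eventually_prod_iff.1 (hgraph.eventually_const_lt hpos)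
  obtain ⟨i, hi, hsubi, q, hqQ, hq⟩ := (hP.and (hsub.and
    (eventually_exists_mem_superdifferential_of_tendstoUniformly hv hcont hp hQ))).exists
  exact (hPQ hi hqQ).not_ge (viscSub_iff_forall_mem_superdifferential.1 hsubi q.1 q.2 hq)

lemma ViscSuper.of_tendstoUniformly
    (hE : ∀ x r p, Tendsto (fun q : ι × 𝔼 n × ℝ × 𝔼 n => E q.1 q.2.1 q.2.2.1 q.2.2.2)
      (l ×ˢ 𝓝 (x, r, p)) (𝓝 (E₀ x r p)))
    (hv : TendstoUniformly v u l) (hcont : ∀ᶠ i in l, Continuous (v i))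
    (hsuper : ∀ᶠ i in l, ViscSuper (E i) (v i)) : ViscSuper E₀ u := by
  have hreflect : ∀ (x : 𝔼 n) (r : ℝ) (p : 𝔼 n), Tendsto
      (fun q : ι × 𝔼 n × ℝ × 𝔼 n => (q.1, q.2.1, -q.2.2.1, -q.2.2.2))
      (l ×ˢ 𝓝 (x, r, p)) (l ×ˢ 𝓝 (x, -r, -p)) := fun x r p =>
    tendsto_fst.prodMk <| (Continuous.tendsto (by fun_prop :
      Continuous fun q : 𝔼 n × ℝ × 𝔼 n => (q.1, -q.2.1, -q.2.2)) (x, r, p)).comp tendsto_snd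
  refine viscSuper_iff_viscSub_neg.2 (ViscSub.of_tendstoUniformly
    (E := fun i x r p => -E i x (-r) (-p)) (v := fun i => -v i)
    (fun x r p => ((hE x (-r) (-p)).comp (hreflect x r p)).neg)
    (uniformContinuous_neg.comp_tendstoUniformly hv)
    (hcont.mono fun _ h => h.neg) (hsuper.mono fun _ => viscSuper_iff_viscSub_neg.1))

lemma ViscSol.of_tendstoUniformly
    (hE : ∀ x r p, Tendsto (fun q : ι × 𝔼 n × ℝ × 𝔼 n => E q.1 q.2.1 q.2.2.1 q.2.2.2)
      (l ×ˢ 𝓝 (x, r, p)) (𝓝 (E₀ x r p)))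
    (hv : TendstoUniformly v u l) (hcont : ∀ᶠ i in l, Continuous (v i))
    (hsol : ∀ᶠ i in l, ViscSol (E i) (v i)) : ViscSol E₀ u :=
  ⟨ViscSub.of_tendstoUniformly hE hv hcont (hsol.mono fun _ h => h.1),
    ViscSuper.of_tendstoUniformly hE hv hcont (hsol.mono fun _ h => h.2)⟩

end Stability

section ConvexHamiltonian

variable {G : 𝔼 n → 𝔼 n → ℝ} {g₁ g₂ u w : 𝔼 n → ℝ}

lemma ViscSub.convex_combination (hG : Continuous fun q : 𝔼 n × 𝔼 n => G q.1 q.2)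
    (hconv : ∀ x, ConvexOn ℝ univ (G x)) (hg₁ : Continuous g₁) (hg₂ : Continuous g₂)
    {K : NNReal} (hu : LipschitzWith K u) (hw : Continuous w)
    (hus : ViscSub (fun x _ p => g₁ x + G x p) u) (hws : ViscSub (fun x _ p => g₂ x + G x p) w)
    {a b : ℝ} (ha : 0 < a) (hb : 0 < b) (hab : a + b = 1) :
    ViscSub (fun x _ p => (a * g₁ x + b * g₂ x) + G x p) (a • u + b • w) := by
  refine viscSub_iff_forall_mem_superdifferential.2 fun x p hp => ?_
  obtain ⟨q, hq, q', hq', rfl⟩ := exists_mem_limitingSuperdifferential_of_add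
    ((lipschitzWith_smul a).comp hu) (hw.const_smul b) hp
  have hGq := hus.nonpos_of_mem_limitingSuperdifferential (by fun_prop)
    (mem_limitingSuperdifferential_of_const_smul ha hq)
  have hGq' := hws.nonpos_of_mem_limitingSuperdifferential (by fun_prop)
    (mem_limitingSuperdifferential_of_const_smul hb hq')
  have hGconv := (hconv x).2 (mem_univ (a⁻¹ • q)) (mem_univ (b⁻¹ • q')) ha.le hb.le hab
  rw [smul_inv_smul₀ ha.ne', smul_inv_smul₀ hb.ne', smul_eq_mul, smul_eq_mul] at hGconv
  linarith [mul_le_mul_of_nonneg_left hGq ha.le, mul_le_mul_of_nonneg_left hGq' hb.le]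

lemma ViscSub.le_of_isLocalMax_sub (hG : Continuous fun q : 𝔼 n × 𝔼 n => G q.1 q.2)
    (hg₁ : Continuous g₁) (hg₂ : Continuous g₂) {K : NNReal} (hu : LipschitzWith K u)
    (hw : Continuous w) (hus : ViscSub (fun x _ p => g₁ x + G x p) u)
    (hws : ViscSuper (fun x _ p => g₂ x + G x p) w) {z : 𝔼 n} (hmax : IsLocalMax (u - w) z) :
    g₁ z ≤ g₂ z := by
  have hzero : (0 : 𝔼 n) ∈ superdifferential (u + -w) z :=
    ⟨0, contDiff_const, hasGradientAt_const z 0, by simpa [← sub_eq_add_neg] using hmax⟩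
  obtain ⟨q, hq, q', hq', hqq'⟩ := exists_mem_limitingSuperdifferential_of_add hu hw.neg hzero
  have hsub := hus.nonpos_of_mem_limitingSuperdifferential (by fun_prop) hq
  have hsuper := hws.nonneg_of_mem_limitingSuperdifferential_neg (by fun_prop) hq'
  rw [← eq_neg_of_add_eq_zero_left hqq'] at hsuper
  linarith

theorem exists_forall_viscSol_lipschitzWith (hG : Continuous fun q : 𝔼 n × 𝔼 n => G q.1 q.2)
    (hconv : ∀ x, ConvexOn ℝ univ (G x)) (hbdd : BddBelow (range fun x => G x 0))
    (hcoer : ∀ C, ∃ R, ∀ x p, R ≤ ‖p‖ → C ≤ |G x p|) (C : ℝ) :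
    ∃ K : NNReal, ∀ g u : 𝔼 n → ℝ, (∀ x, |g x| ≤ C) → Continuous u → (∃ B, ∀ x, |u x| ≤ B) →
      ViscSol (fun x _ p => g x + G x p) u → LipschitzWith K u := by
  rcases forall_lt_or_exists_span_opposite_signs hG hconv hbdd hcoer C with
    ⟨R, hR⟩ | ⟨p, hp0, hspan, hlt, hgt⟩
  · refine ⟨R.toNNReal, fun g u hg hu ⟨B, hB⟩ ⟨hsub, _⟩ => ?_⟩
    refine lipschitzWith_of_norm_superdifferential_le hu
      ⟨B, forall_mem_range.2 fun x => (abs_le.1 (hB x)).2⟩ fun x p hp => ?_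
    have hGp := viscSub_iff_forall_mem_superdifferential.1 hsub x p hp
    by_contra! hlt
    linarith [hR x p ((Real.le_coe_toNNReal R).trans hlt.le), (abs_le.1 (hg x)).1]
  · refine ⟨‖p‖₊, fun g u hg hu ⟨B, hB⟩ ⟨hsub, hsuper⟩ => ?_⟩
    refine lipschitzWith_of_forall_notMem_superdifferential hp0 hspan hu
      ⟨B, forall_mem_range.2 fun x => (abs_le.1 (hB x)).2⟩
      ⟨B, forall_mem_range.2 fun x => neg_le.1 (abs_le.1 (hB x)).1⟩
      (fun x hp => ?_) fun x hp => ?_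
    · linarith [viscSub_iff_forall_mem_superdifferential.1 hsub x p hp, hlt x, (abs_le.1 (hg x)).1]
    · linarith [viscSuper_iff_forall_mem_superdifferential_neg.1 hsuper x p hp, hgt x,
        (abs_le.1 (hg x)).2]

end ConvexHamiltonian

section Torus

/-- The closed unit cube, which contains a fundamental domain of `ℝⁿ/ℤⁿ`. -/
def unitCube (n : ℕ) : Set (𝔼 n) :=
  {x | ∀ i, x i ∈ Icc (0 : ℝ) 1}

lemma isCompact_unitCube : IsCompact (unitCube n) := by
  have hpreimage : unitCube n = EuclideanSpace.equiv (Fin n) ℝ ⁻¹' univ.pi fun _ => Icc 0 1 := by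
    ext x
    simp [unitCube, Pi.le_def, forall_and]
  rw [hpreimage]
  exact (EuclideanSpace.equiv (Fin n) ℝ).toHomeomorph.isCompact_preimage.2
    (isCompact_univ_pi fun _ => isCompact_Icc)

lemma unitCube_nonempty : (unitCube n).Nonempty :=
  ⟨0, fun _ => by simp⟩

lemma exists_mem_unitCube_forall_znPeriodic_eq (x : 𝔼 n) :
    ∃ y ∈ unitCube n, ∀ u, ZnPeriodic u → u y = u x := by
  refine ⟨_, fun i => ?_, fun u hu => hu x fun i => -⌊x i⌋⟩
  have hfract : (x + (EuclideanSpace.equiv (Fin n) ℝ).symm fun i => ((-⌊x i⌋ : ℤ) : ℝ)) i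
      = Int.fract (x i) := by
    simp [Int.fract, sub_eq_add_neg]
  rw [hfract]
  exact ⟨Int.fract_nonneg _, (Int.fract_lt_one _).le⟩

namespace ZnPeriodic

variable {u w : 𝔼 n → ℝ}

lemma add (hu : ZnPeriodic u) (hw : ZnPeriodic w) : ZnPeriodic (u + w) := fun x k =>
  congrArg₂ (· + ·) (hu x k) (hw x k)

lemma sub (hu : ZnPeriodic u) (hw : ZnPeriodic w) : ZnPeriodic (u - w) := fun x k =>
  congrArg₂ (· - ·) (hu x k) (hw x k)

lemma const_smul (hu : ZnPeriodic u) (c : ℝ) : ZnPeriodic (c • u) := fun x k =>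
  congrArg (c • ·) (hu x k)

lemma exists_mem_unitCube_forall_le (hu : ZnPeriodic u) (hcont : Continuous u) :
    ∃ z ∈ unitCube n, ∀ x, u x ≤ u z := by
  obtain ⟨z, hzmem, hz⟩ :=
    isCompact_unitCube.exists_isMaxOn unitCube_nonempty hcont.continuousOn
  refine ⟨z, hzmem, fun x => ?_⟩
  obtain ⟨y, hy, hyx⟩ := exists_mem_unitCube_forall_znPeriodic_eq x
  exact hyx u hu ▸ hz hy

lemma exists_forall_abs_le (hu : ZnPeriodic u) (hcont : Continuous u) : ∃ B, ∀ x, |u x| ≤ B :=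
  let ⟨z, _, hz⟩ := exists_mem_unitCube_forall_le (u := fun x => |u x|)
    (fun x k => congrArg abs (hu x k)) hcont.abs
  ⟨|u z|, hz⟩

lemma of_tendsto {ι : Type*} {l : Filter ι} [l.NeBot] {v : ι → 𝔼 n → ℝ}
    (hv : ∀ᶠ i in l, ZnPeriodic (v i)) (hlim : ∀ x, Tendsto (fun i => v i x) l (𝓝 (u x))) :
    ZnPeriodic u := fun x k =>
  tendsto_nhds_unique_of_eventuallyEq (hlim _) (hlim x) (hv.mono fun _ hi => hi x k)

lemma tendstoUniformly {ι : Type*} {l : Filter ι} {v : ι → 𝔼 n → ℝ}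
    (hv : ∀ᶠ i in l, ZnPeriodic (v i)) (hu : ZnPeriodic u)
    (hlim : TendstoUniformlyOn v u l (unitCube n)) : TendstoUniformly v u l := by
  intro U hU
  filter_upwards [hlim U hU, hv] with i hi hvi x
  obtain ⟨y, hy, hyx⟩ := exists_mem_unitCube_forall_znPeriodic_eq x
  exact hyx u hu ▸ hyx (v i) hvi ▸ hi y hy

end ZnPeriodic

end Torus

section VanishingDiscount

/-- A periodic viscosity solution `u` of the discounted equation `f(x, ε u) + G(x, Du) = 0` with
prescribed bounds on `u` and on its Lipschitz constant; `ε = 0` is the ergodic equation. -/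
structure IsBoundedSol (f : 𝔼 n → ℝ → ℝ) (G : 𝔼 n → 𝔼 n → ℝ) (K : NNReal) (B ε : ℝ)
    (u : 𝔼 n → ℝ) : Prop where
  periodic : ZnPeriodic u
  lipschitz : LipschitzWith K u
  abs_le : ∀ x, |u x| ≤ B
  viscSol : ViscSol (fun x r p => f x (ε * r) + G x p) u

variable {f : 𝔼 n → ℝ → ℝ} {G : 𝔼 n → 𝔼 n → ℝ} {K : NNReal} {B ε δ : ℝ} {u w h : 𝔼 n → ℝ}

lemma IsBoundedSol.of_tendstoUniformly {l : Filter ℝ} [l.NeBot] {v : ℝ → 𝔼 n → ℝ}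
    (hf : Continuous fun q : 𝔼 n × ℝ => f q.1 q.2) (hG : Continuous fun q : 𝔼 n × 𝔼 n => G q.1 q.2)
    (hl : l ≤ 𝓝 ε) (hv : ∀ᶠ δ in l, IsBoundedSol f G K B δ (v δ)) (hlim : TendstoUniformly v u l) :
    IsBoundedSol f G K B ε u where
  periodic := .of_tendsto (hv.mono fun _ h => h.periodic) hlim.tendsto_at
  lipschitz := (isClosed_setOfPred_lipschitzWith K).mem_of_tendsto
    (tendsto_pi_nhds.2 hlim.tendsto_at) (hv.mono fun _ h => h.lipschitz)
  abs_le x := le_of_tendsto (hlim.tendsto_at x).abs (hv.mono fun _ h => h.abs_le x)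
  viscSol := by
    refine .of_tendstoUniformly (fun x r p => ?_) hlim (hv.mono fun _ h => h.lipschitz.continuous)
      (hv.mono fun _ h => h.viscSol)
    have hE : Continuous fun q : ℝ × 𝔼 n × ℝ × 𝔼 n => f q.2.1 (q.1 * q.2.2.1) + G q.2.1 q.2.2.2 :=
      (hf.comp (by fun_prop : Continuous fun q : ℝ × 𝔼 n × ℝ × 𝔼 n => (q.2.1, q.1 * q.2.2.1))).add
        (hG.comp (by fun_prop : Continuous fun q : ℝ × 𝔼 n × ℝ × 𝔼 n => (q.2.1, q.2.2.2)))
    refine (hE.tendsto (ε, x, r, p)).mono_left ?_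
    rw [nhds_prod_eq (x := ε)]
    exact Filter.prod_mono_left _ hl

lemma IsBoundedSol.exists_tendstoUniformly {𝒰 : Ultrafilter ℝ} {v : ℝ → 𝔼 n → ℝ}
    (hf : Continuous fun q : 𝔼 n × ℝ => f q.1 q.2) (hG : Continuous fun q : 𝔼 n × 𝔼 n => G q.1 q.2)
    (h𝒰 : ↑𝒰 ≤ 𝓝 ε) (hv : ∀ᶠ δ in 𝒰, IsBoundedSol f G K B δ (v δ)) :
    ∃ u, IsBoundedSol f G K B ε u ∧ TendstoUniformly v u 𝒰 := by
  have hpointwise : ∀ x, ∃ y, Tendsto (fun δ => v δ x) 𝒰 (𝓝 y) := fun x =>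
    let ⟨y, _, hy⟩ := isCompact_Icc.ultrafilter_le_nhds (𝒰.map fun δ => v δ x)
      (le_principal_iff.2 (hv.mono fun _ h => mem_Icc.2 (_root_.abs_le.1 (h.abs_le x))))
    ⟨y, hy⟩
  choose u hu using hpointwise
  have hlip := hv.mono fun _ h => h.lipschitz
  have hper := hv.mono fun _ h => h.periodic
  have hulip : LipschitzWith K u :=
    (isClosed_setOfPred_lipschitzWith K).mem_of_tendsto (tendsto_pi_nhds.2 hu) hlip
  have hlim : TendstoUniformly v u 𝒰 := ZnPeriodic.tendstoUniformly hper (.of_tendsto hper hu)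
    (tendstoUniformlyOn_of_lipschitzWith isCompact_unitCube hlip hulip hu)
  exact ⟨u, .of_tendstoUniformly hf hG h𝒰 hv hlim, hlim⟩

lemma IsBoundedSol.div_le_div_of_isLocalMax
    (hf : Continuous fun q : 𝔼 n × ℝ => f q.1 q.2) (hG : Continuous fun q : 𝔼 n × 𝔼 n => G q.1 q.2)
    (hconv : ∀ x, ConvexOn ℝ univ (G x)) (hδ : 0 < δ) (hδε : δ < ε)
    (hh : IsBoundedSol f G K B 0 h) (hu : IsBoundedSol f G K B ε u) (hw : IsBoundedSol f G K B δ w)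
    {z : 𝔼 n} (hmax : IsLocalMax ((1 - δ / ε) • h + (δ / ε) • u - w) z) :
    (f z (ε * u z) - f z 0) / ε ≤ (f z (δ * w z) - f z 0) / δ := by
  have hε : 0 < ε := hδ.trans hδε
  have hcont : ∀ {c} {u : 𝔼 n → ℝ}, LipschitzWith K u → Continuous fun x => f x (c * u x) :=
    fun {c} {_} hu => hf.comp (continuous_id.prodMk (hu.continuous.const_mul c))
  have hsub : ViscSub (fun x _ p => ((1 - δ / ε) * f x (0 * h x) + δ / ε * f x (ε * u x)) + G x p)
      ((1 - δ / ε) • h + (δ / ε) • u) :=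
    ViscSub.convex_combination hG hconv (hcont hh.lipschitz) (hcont hu.lipschitz) hh.lipschitz
      hu.lipschitz.continuous hh.viscSol.1 hu.viscSol.1 (sub_pos.2 ((div_lt_one hε).2 hδε))
      (div_pos hδ hε) (sub_add_cancel _ _)
  obtain ⟨L, hL⟩ : ∃ L, LipschitzWith L ((1 - δ / ε) • h + (δ / ε) • u) :=
    ⟨_, ((lipschitzWith_smul (1 - δ / ε)).comp hh.lipschitz).add
      ((lipschitzWith_smul (δ / ε)).comp hu.lipschitz)⟩
  have hle : (1 - δ / ε) * f z (0 * h z) + δ / ε * f z (ε * u z) ≤ f z (δ * w z) :=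
    hsub.le_of_isLocalMax_sub hG
      (((hcont hh.lipschitz).const_mul _).add ((hcont hu.lipschitz).const_mul _))
      (hcont hw.lipschitz) hL hw.lipschitz.continuous hw.viscSol.2 hmax
  rw [zero_mul] at hle
  rw [le_div_iff₀ hδ]
  calc (f z (ε * u z) - f z 0) / ε * δ
      = (1 - δ / ε) * f z 0 + δ / ε * f z (ε * u z) - f z 0 := by ring
    _ ≤ f z (δ * w z) - f z 0 := by gcongr

lemma IsBoundedSol.eventually_forall_le_add {l : Filter ℝ} [l.NeBot] {v : ℝ → 𝔼 n → ℝ}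
    (hf : ContDiff ℝ 1 fun q : 𝔼 n × ℝ => f q.1 q.2) (hpos : ∀ x, 0 < deriv (f x) 0)
    (hG : Continuous fun q : 𝔼 n × 𝔼 n => G q.1 q.2) (hconv : ∀ x, ConvexOn ℝ univ (G x))
    (hl : l ≤ 𝓝[>] 0) (hv : ∀ᶠ ε in 𝓝[>] 0, IsBoundedSol f G K B ε (v ε))
    (hh : IsBoundedSol f G K B 0 h) (hlim : TendstoUniformly v h l) {η : ℝ} (hη : 0 < η) :
    ∀ᶠ δ in 𝓝[>] 0, ∀ x, h x ≤ v δ x + η := by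
  have hslope := (eventually_forall_le_add_of_div_le_div isCompact_unitCube
    (fun x => (hf.comp (contDiff_prodMk_right x)).differentiable one_ne_zero)
    (continuous_deriv_of_contDiff hf) hpos B (show 0 < η / 3 by positivity)).curry
  have hevent : ∀ᶠ ε in 𝓝[>] 0, 0 < ε ∧ _ ∧ IsBoundedSol f G K B ε (v ε) :=
    eventually_mem_nhdsWithin.and (hslope.and hv)
  obtain ⟨ε, ⟨hε, hslopeε, hvε⟩, hclose⟩ := ((hevent.filter_mono hl).and
    (Metric.tendstoUniformly_iff.1 hlim (η / 3) (by positivity))).exists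
  filter_upwards [hslopeε, hv, Ioo_mem_nhdsGT hε] with δ hslopeδ hvδ ⟨hδ, hδε⟩ x
  set s := δ / ε
  have hs₀ : 0 ≤ s := (div_pos hδ hε).le
  have hs₁ : s ≤ 1 := (div_le_one hε).2 hδε.le
  obtain ⟨z, hz, hmax⟩ := (((hh.periodic.const_smul (1 - s)).add (hvε.periodic.const_smul s)).sub
    hvδ.periodic).exists_mem_unitCube_forall_le
      (((hh.lipschitz.continuous.const_smul _).add (hvε.lipschitz.continuous.const_smul _)).sub
        hvδ.lipschitz.continuous)
  have hvz : v ε z ≤ v δ z + η / 3 :=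
    hslopeδ z hz _ _ (hvε.abs_le z) (hvδ.abs_le z) <|
      hh.div_le_div_of_isLocalMax hf.continuous hG hconv hδ hδε hvε hvδ (.of_forall hmax)
  have hhv : ∀ y, |h y - v ε y| < η / 3 := hclose
  have hxz : (1 - s) * h x + s * v ε x - v δ x ≤ (1 - s) * h z + s * v ε z - v δ z := hmax x
  have hx : s * (h x - v ε x) ≤ η / 3 := by
    nlinarith [abs_lt.1 (hhv x)]
  have hz : (1 - s) * (h z - v ε z) ≤ η / 3 := by
    nlinarith [abs_lt.1 (hhv z)]
  linarith

lemma exists_forall_abs_le_of_monotone (hf : Continuous fun q : 𝔼 n × ℝ => f q.1 q.2)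
    (hfper : ∀ r, ZnPeriodic fun x => f x r) (hmono : ∀ x, Monotone (f x)) (B : ℝ) :
    ∃ C, ∀ x r, |r| ≤ B → |f x r| ≤ C := by
  have hcont : ∀ r, Continuous fun x => f x r := fun r =>
    hf.comp (continuous_id.prodMk continuous_const)
  obtain ⟨C₁, hC₁⟩ := (hfper (-B)).exists_forall_abs_le (hcont (-B))
  obtain ⟨C₂, hC₂⟩ := (hfper B).exists_forall_abs_le (hcont B)
  refine ⟨max C₁ C₂, fun x r hr => ?_⟩
  exact (abs_le_max_abs_abs (hmono x (abs_le.1 hr).1) (hmono x (abs_le.1 hr).2)).trans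
    (max_le_max (hC₁ x) (hC₂ x))

lemma ViscSol.abs_le_two_mul_of_ergodic {K' : NNReal} {U : ℝ}
    (hf : Continuous fun q : 𝔼 n × ℝ => f q.1 q.2) (hmono : ∀ x, StrictMono (f x))
    (hG : Continuous fun q : 𝔼 n × 𝔼 n => G q.1 q.2) (hε : 0 < ε)
    (hulip : LipschitzWith K u) (huper : ZnPeriodic u) (hU : ∀ x, |u x| ≤ U)
    (hu : ViscSol (fun x _ p => f x 0 + G x p) u)
    (hwlip : LipschitzWith K' w) (hwper : ZnPeriodic w)
    (hw : ViscSol (fun x r p => f x (ε * r) + G x p) w) (x : 𝔼 n) : |w x| ≤ 2 * U := by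
  have hcont₀ : Continuous fun x => f x 0 := hf.comp (continuous_id.prodMk continuous_const)
  have hcont : Continuous fun x => f x (ε * w x) :=
    hf.comp (continuous_id.prodMk (hwlip.continuous.const_mul ε))
  obtain ⟨y, -, hy⟩ := (huper.sub hwper).exists_mem_unitCube_forall_le
    (hulip.continuous.sub hwlip.continuous)
  obtain ⟨z, -, hz⟩ := (hwper.sub huper).exists_mem_unitCube_forall_le
    (hwlip.continuous.sub hulip.continuous)
  have hwy : 0 ≤ w y := nonneg_of_mul_nonneg_right ((hmono y).le_iff_le.1
    (hu.1.le_of_isLocalMax_sub hG hcont₀ hcont hulip hwlip.continuous hw.2 (.of_forall hy))) hε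
  have hwz : w z ≤ 0 := nonpos_of_mul_nonpos_right ((hmono z).le_iff_le.1
    (ViscSub.le_of_isLocalMax_sub hG hcont hcont₀ hwlip hulip.continuous hw.1 hu.2
      (.of_forall hz))) hε
  have hyx : u x - w x ≤ u y - w y := hy x
  have hzx : w x - u x ≤ w z - u z := hz x
  exact abs_le.2 ⟨by linarith [(abs_le.1 (hU x)).1, (abs_le.1 (hU y)).2],
    by linarith [(abs_le.1 (hU x)).2, (abs_le.1 (hU z)).1]⟩

theorem exists_forall_viscSol_isBoundedSol
    (hf : Continuous fun q : 𝔼 n × ℝ => f q.1 q.2) (hfper : ∀ r, ZnPeriodic fun x => f x r)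
    (hmono : ∀ x, StrictMono (f x)) (hG : Continuous fun q : 𝔼 n × 𝔼 n => G q.1 q.2)
    (hGper : ∀ p, ZnPeriodic fun x => G x p) (hconv : ∀ x, ConvexOn ℝ univ (G x))
    (hcoer : ∀ C, ∃ R, ∀ x p, R ≤ ‖p‖ → C ≤ |G x p|)
    (hErg : ∃ u, Continuous u ∧ ZnPeriodic u ∧ ViscSol (fun x _ p => f x 0 + G x p) u) :
    ∃ K B, ∀ ε ∈ Ioc (0 : ℝ) 1, ∀ w, Continuous w → ZnPeriodic w →
      ViscSol (fun x r p => f x (ε * r) + G x p) w → IsBoundedSol f G K B ε w := by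
  have hGbdd : BddBelow (range fun x => G x 0) :=
    let ⟨C, hC⟩ := (hGper 0).exists_forall_abs_le (hG.comp (by fun_prop :
      Continuous fun x : 𝔼 n => (x, (0 : 𝔼 n))))
    ⟨-C, forall_mem_range.2 fun x => (abs_le.1 (hC x)).1⟩
  have hlip : ∀ B, ∃ K, ∀ (ε : ℝ) (w : 𝔼 n → ℝ), (∀ x, |ε * w x| ≤ B) → Continuous w →
      ZnPeriodic w → ViscSol (fun x r p => f x (ε * r) + G x p) w → LipschitzWith K w := by
    intro B
    obtain ⟨C, hC⟩ := exists_forall_abs_le_of_monotone hf hfper (fun x => (hmono x).monotone) B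
    obtain ⟨K, hK⟩ := exists_forall_viscSol_lipschitzWith hG hconv hGbdd hcoer C
    exact ⟨K, fun ε w hB hw hwper hsol => hK (fun x => f x (ε * w x)) w
      (fun x => hC x _ (hB x)) hw (hwper.exists_forall_abs_le hw) hsol⟩
  obtain ⟨u, hu, huper, husol⟩ := hErg
  obtain ⟨U, hU⟩ := huper.exists_forall_abs_le hu
  obtain ⟨L, hL⟩ := hlip 0
  obtain ⟨K, hK⟩ := hlip (2 * U)
  have hulip : LipschitzWith L u := hL 0 u (by simp) hu huper (by simpa using husol)
  refine ⟨K, 2 * U, fun ε hε w hw hwper hsol => ?_⟩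
  obtain ⟨C, hC⟩ := hwper.exists_forall_abs_le hw
  obtain ⟨K', hK'⟩ := hlip (ε * C)
  have habs_mul : ∀ x, |ε * w x| = ε * |w x| := fun x => by rw [abs_mul, abs_of_pos hε.1]
  have hwlip : LipschitzWith K' w := hK' ε w
    (fun x => (habs_mul x).trans_le (mul_le_mul_of_nonneg_left (hC x) hε.1.le)) hw hwper hsol
  have hbound : ∀ x, |w x| ≤ 2 * U :=
    husol.abs_le_two_mul_of_ergodic hf hmono hG hε.1 hulip huper hU hwlip hwper hsol
  refine ⟨hwper, hK ε w (fun x => ?_) hw hwper hsol, hbound, hsol⟩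
  exact ((habs_mul x).trans_le (mul_le_of_le_one_left (abs_nonneg _) hε.2)).trans (hbound x)

theorem stmt0_general (hf : ContDiff ℝ 1 fun q : 𝔼 n × ℝ => f q.1 q.2)
    (hfper : ∀ r, ZnPeriodic fun x => f x r) (hpos : ∀ x r, 0 < deriv (f x) r)
    (hG : Continuous fun q : 𝔼 n × 𝔼 n => G q.1 q.2) (hGper : ∀ p, ZnPeriodic fun x => G x p)
    (hconv : ∀ x, ConvexOn ℝ univ (G x)) (hcoer : ∀ C, ∃ R, ∀ x p, R ≤ ‖p‖ → C ≤ |G x p|)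
    (hErg : ∃ u, Continuous u ∧ ZnPeriodic u ∧ ViscSol (fun x _ p => f x 0 + G x p) u)
    {v : ℝ → 𝔼 n → ℝ} (hv : ∀ ε > 0, Continuous (v ε) ∧ ZnPeriodic (v ε) ∧
      ViscSol (fun x r p => f x (ε * r) + G x p) (v ε)) :
    ∃ v0, Continuous v0 ∧ ZnPeriodic v0 ∧ TendstoUniformly v v0 (𝓝[>] 0) ∧
      ViscSol (fun x _ p => f x 0 + G x p) v0 := by
  obtain ⟨K, B, hKB⟩ := exists_forall_viscSol_isBoundedSol hf.continuous hfper
    (fun x => strictMono_of_deriv_pos (hpos x)) hG hGper hconv hcoer hErg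
  have hbdd : ∀ᶠ ε in 𝓝[>] 0, IsBoundedSol f G K B ε (v ε) := by
    filter_upwards [Ioc_mem_nhdsGT one_pos] with ε hε
    exact hKB ε hε (v ε) (hv ε hε.1).1 (hv ε hε.1).2.1 (hv ε hε.1).2.2
  have hle : ∀ 𝒰 𝒱 : Ultrafilter ℝ, 𝒰 ≤ 𝓝[>] (0 : ℝ) → 𝒱 ≤ 𝓝[>] (0 : ℝ) → ∀ u w,
      IsBoundedSol f G K B 0 u → TendstoUniformly v u 𝒰 → TendstoUniformly v w 𝒱 → u ≤ w := by
    intro 𝒰 𝒱 h𝒰 h𝒱 u w hu hvu hvw x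
    refine le_of_forall_pos_le_add fun η hη => ?_
    have hev := hu.eventually_forall_le_add hf (hpos · 0) hG hconv h𝒰 hbdd hvu hη
    exact ge_of_tendsto ((hvw.tendsto_at x).add_const η)
      ((hev.filter_mono h𝒱).mono fun _ hδ => hδ x)
  obtain ⟨v0, hv0, hlim⟩ := exists_tendstoUniformly_of_forall_ultrafilter
    (fun 𝒰 h𝒰 => IsBoundedSol.exists_tendstoUniformly hf.continuous hG
      (h𝒰.trans nhdsWithin_le_nhds) (hbdd.filter_mono h𝒰))
    fun 𝒰 𝒱 h𝒰 h𝒱 u w hu hw hvu hvw =>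
      (hle 𝒰 𝒱 h𝒰 h𝒱 u w hu hvu hvw).antisymm (hle 𝒱 𝒰 h𝒱 h𝒰 w u hw hvw hvu)
  exact ⟨v0, hv0.lipschitz.continuous, hv0.periodic, hlim, by simpa using hv0.viscSol⟩

end VanishingDiscount

end ViscositySolutions

theorem stmt0 {n : ℕ}
    (G : EuclideanSpace ℝ (Fin n) → EuclideanSpace ℝ (Fin n) → ℝ)
    (f : EuclideanSpace ℝ (Fin n) → ℝ → ℝ)
    -- G ∈ C¹(𝕋ⁿ × ℝⁿ)
    (hGsmooth : ContDiff ℝ 1 (fun q : EuclideanSpace ℝ (Fin n) × EuclideanSpace ℝ (Fin n) => G q.1 q.2))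
    (hGper : ∀ (x p : EuclideanSpace ℝ (Fin n)) (k : Fin n → ℤ),
      G (x + (EuclideanSpace.equiv (Fin n) ℝ).symm (fun i => (k i : ℝ))) p = G x p)
    -- f ∈ C²(𝕋ⁿ × ℝ)
    (hfsmooth : ContDiff ℝ 2 (fun q : EuclideanSpace ℝ (Fin n) × ℝ => f q.1 q.2))
    (hfper : ∀ (x : EuclideanSpace ℝ (Fin n)) (r : ℝ) (k : Fin n → ℤ),
      f (x + (EuclideanSpace.equiv (Fin n) ℝ).symm (fun i => (k i : ℝ))) r = f x r)
    -- (A1)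
    (hA1 : ∀ C : ℝ, ∃ R : ℝ, ∀ (x p : EuclideanSpace ℝ (Fin n)), R ≤ ‖p‖ →
      C ≤ (G x p) ^ 2 / (2 * ‖p‖) - ‖fderiv ℝ (fun y => G y p) x‖)
    -- (A2)
    (hA2 : ∀ x : EuclideanSpace ℝ (Fin n), ConvexOn ℝ Set.univ (G x))
    -- (A3)
    (hA3pos : ∀ (x : EuclideanSpace ℝ (Fin n)) (r : ℝ), 0 < deriv (f x) r)
    (hA3M : ∃ M : ℝ, 0 < M ∧ ∀ x : EuclideanSpace ℝ (Fin n),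
      f x (-M) ≤ -G x 0 ∧ -G x 0 ≤ f x M)
    -- the ergodic equation f(x,0) + G(x,Du) = 0 has a continuous viscosity solution
    (hErg : ∃ u : EuclideanSpace ℝ (Fin n) → ℝ, Continuous u ∧ ZnPeriodic u ∧
      ViscSol (fun x _ p => f x 0 + G x p) u)
    -- for each ε > 0, v ε is a continuous viscosity solution of f(x, ε vᵉ) + G(x, Dvᵉ) = 0
    (v : ℝ → EuclideanSpace ℝ (Fin n) → ℝ)
    (hv : ∀ ε : ℝ, 0 < ε → Continuous (v ε) ∧ ZnPeriodic (v ε) ∧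
      ViscSol (fun x r p => f x (ε * r) + G x p) (v ε)) :
    ∃ v0 : EuclideanSpace ℝ (Fin n) → ℝ, Continuous v0 ∧ ZnPeriodic v0 ∧
      TendstoUniformly v v0 (𝓝[>] (0 : ℝ)) ∧
      ViscSol (fun x _ p => f x 0 + G x p) v0 :=
  stmt0_general (hfsmooth.of_le one_le_two) (fun r x k => hfper x r k) hA3pos hGsmooth.continuous
    (fun p x k => hGper x p k) hA2
    (exists_forall_le_abs_of_le_sq_div_sub (fun _ _ => norm_nonneg _) hA1) hErg hv
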